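/- arXiv:2210.07987 — 2 statements merged into one kernel-verified Lean document; each statement's English description precedes it below -/
import Mathlib

section
/- Let d ≥ 1, q > 0, k ∈ ℕ, and let C ∈ ℝ^{d×d} be symmetric positive definite. If the random vector u ∈ ℝ^d has the multivariate q-exponential density p(u) = (q/2)(2π)^{−d/2} det(C)^{−1/2} r(u)^{(q/2−1)(d/2)} exp{−(1/2) r(u)^{q/2}} with r(u) = uᵀ C^{−1} u, and R = r(u)^{1/2}, then the k-th moment of R equals E[R^k] = ∫_{ℝ^d} (uᵀ C^{−1} u)^{k/2} p(u) du = 2^{k/q} Γ(d/2 + k/q) / Γ(d/2). -/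
open Real MeasureTheory Matrix

/-!
Writing `C⁻¹ = Bᵀ B` and substituting `v = B u` turns the quadratic form `r` into `‖v‖²`. In polar
coordinates, with `t = ‖v‖²` as the radial variable, Lebesgue measure on `ℝᵈ` then pushes forward
under `r` to `√(det C) π^{d/2} / Γ(d/2) · t^{d/2 - 1} dt`. Against this measure the factor
`t^{(q/2 - 1) d/2}` of the density leaves a Gamma integral in the variable `t^{q/2}`.
-/

section LinearChangeOfVariables

variable {F : Type*} [NormedAddCommGroup F] [NormedSpace ℝ F]

lemma integral_comp_linearMap_of_det_ne_zero {E : Type*} [NormedAddCommGroup E] [NormedSpace ℝ E]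
    [FiniteDimensional ℝ E] [MeasurableSpace E] [BorelSpace E] (μ : Measure E) [μ.IsAddHaarMeasure]
    {L : E →ₗ[ℝ] E} (hL : LinearMap.det L ≠ 0) (f : E → F) :
    ∫ x, f (L x) ∂μ = |(LinearMap.det L)⁻¹| • ∫ x, f x ∂μ := by
  have L_embedding : MeasurableEmbedding L :=
    (L.equivOfDetNeZero hL).toContinuousLinearEquiv.toHomeomorph.measurableEmbedding
  rw [← L_embedding.integral_map, Measure.map_linearMap_addHaar_eq_smul_addHaar μ hL,
    integral_smul_measure, ENNReal.toReal_ofReal (abs_nonneg _)]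

variable {ι : Type*} [Fintype ι]

lemma integral_comp_dotProduct_self (f : ℝ → F) :
    ∫ v : ι → ℝ, f (v ⬝ᵥ v) = ∫ x : EuclideanSpace ℝ ι, f (‖x‖ ^ 2) := by
  rw [← (PiLp.volume_preserving_toLp ι).integral_comp
    (MeasurableEquiv.toLp 2 (ι → ℝ)).measurableEmbedding]
  simp only [EuclideanSpace.real_norm_sq_eq, dotProduct, ← sq]

variable [DecidableEq ι]

open scoped MatrixOrder in
lemma exists_isUnit_transpose_mul_self_eq {A : Matrix ι ι ℝ} (hA : A.PosDef) :
    ∃ B : Matrix ι ι ℝ, IsUnit B ∧ A = Bᵀ * B := by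
  simpa only [star_eq_conjTranspose, conjTranspose_eq_transpose_of_trivial] using
    CStarAlgebra.isStrictlyPositive_iff_eq_star_mul_self.mp hA.isStrictlyPositive

lemma integral_comp_dotProduct_mulVec {A : Matrix ι ι ℝ} (hA : A.PosDef) (f : ℝ → F) :
    ∫ u : ι → ℝ, f (u ⬝ᵥ (A *ᵥ u)) = (√A.det)⁻¹ • ∫ v : ι → ℝ, f (v ⬝ᵥ v) := by
  obtain ⟨B, hB, rfl⟩ := exists_isUnit_transpose_mul_self_eq hA
  have quadForm_eq (u : ι → ℝ) : u ⬝ᵥ ((Bᵀ * B) *ᵥ u) = toLin' B u ⬝ᵥ toLin' B u := by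
    rw [toLin'_apply, ← mulVec_mulVec, dotProduct_mulVec, vecMul_transpose]
  have sqrt_det : √(Bᵀ * B).det = |B.det| := by
    rw [det_mul, det_transpose, sqrt_mul_self_eq_abs]
  have det_ne_zero : LinearMap.det (toLin' B) ≠ 0 := by
    rw [LinearMap.det_toLin']
    exact ((isUnit_iff_isUnit_det B).mp hB).ne_zero
  simp_rw [quadForm_eq]
  rw [integral_comp_linearMap_of_det_ne_zero volume det_ne_zero (fun v ↦ f (v ⬝ᵥ v)),
    LinearMap.det_toLin', sqrt_det, abs_inv]

end LinearChangeOfVariables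

section RadialIntegration

variable {F : Type*} [NormedAddCommGroup F] [NormedSpace ℝ F]

lemma setIntegral_Ioi_rpow_smul_comp_sq (a : ℝ) (f : ℝ → F) :
    ∫ y in Set.Ioi (0 : ℝ), y ^ (a - 1) • f (y ^ 2) =
      (2⁻¹ : ℝ) • ∫ t in Set.Ioi (0 : ℝ), t ^ (a / 2 - 1) • f t := by
  rw [← integral_comp_rpow_Ioi_of_pos (g := fun t ↦ t ^ (a / 2 - 1) • f t) two_pos,
    ← integral_smul]
  refine setIntegral_congr_fun measurableSet_Ioi fun y (hy : 0 < y) ↦ ?_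
  have jacobian : y ^ (a - 1) = 2⁻¹ * (2 * y ^ ((2 : ℝ) - 1) * (y ^ (2 : ℝ)) ^ (a / 2 - 1)) := by
    rw [mul_assoc, inv_mul_cancel_left₀ two_ne_zero, ← rpow_mul hy.le, ← rpow_add hy]
    ring_nf
  simp only [smul_smul, jacobian, rpow_two, mul_assoc]

variable {E : Type*} [NormedAddCommGroup E] [InnerProductSpace ℝ E] [FiniteDimensional ℝ E]
  [MeasurableSpace E] [BorelSpace E] [Nontrivial E]

open Module (finrank)

variable (E) in
lemma finrank_mul_volume_real_unitBall :
    finrank ℝ E * (volume : Measure E).real (Metric.ball 0 1) =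
      2 * π ^ ((finrank ℝ E : ℝ) / 2) / Gamma ((finrank ℝ E : ℝ) / 2) := by
  have finrank_pos : (0 : ℝ) < finrank ℝ E := by exact_mod_cast Module.finrank_pos
  have sqrt_pi_pow : √π ^ finrank ℝ E = π ^ ((finrank ℝ E : ℝ) / 2) := by
    rw [sqrt_eq_rpow, ← rpow_mul_natCast pi_pos.le, one_div_mul_eq_div]
  rw [Measure.real, InnerProductSpace.volume_ball, ENNReal.ofReal_one, one_pow, one_mul,
    ENNReal.toReal_ofReal (by positivity), Gamma_add_one (by positivity), sqrt_pi_pow]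
  field_simp

lemma integral_comp_norm_sq (f : ℝ → F) :
    ∫ x : E, f (‖x‖ ^ 2) = (π ^ ((finrank ℝ E : ℝ) / 2) / Gamma ((finrank ℝ E : ℝ) / 2)) •
      ∫ t in Set.Ioi (0 : ℝ), t ^ ((finrank ℝ E : ℝ) / 2 - 1) • f t := by
  have pow_eq_rpow (y : ℝ) : y ^ (finrank ℝ E - 1) = y ^ ((finrank ℝ E : ℝ) - 1) := by
    rw [← rpow_natCast, Nat.cast_pred Module.finrank_pos]
  rw [integral_fun_norm_addHaar volume fun y ↦ f (y ^ 2)]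
  simp only [pow_eq_rpow]
  rw [setIntegral_Ioi_rpow_smul_comp_sq, ← Nat.cast_smul_eq_nsmul ℝ, smul_smul, smul_smul,
    finrank_mul_volume_real_unitBall]
  congr 1
  ring

end RadialIntegration

lemma integral_comp_dotProduct_inv_mulVec {ι F : Type*} [Fintype ι] [DecidableEq ι] [Nonempty ι]
    [NormedAddCommGroup F] [NormedSpace ℝ F] {C : Matrix ι ι ℝ} (hC : C.PosDef) (f : ℝ → F) :
    ∫ u : ι → ℝ, f (u ⬝ᵥ (C⁻¹ *ᵥ u)) =
      (√C.det * π ^ ((Fintype.card ι : ℝ) / 2) / Gamma ((Fintype.card ι : ℝ) / 2)) •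
        ∫ t in Set.Ioi (0 : ℝ), t ^ ((Fintype.card ι : ℝ) / 2 - 1) • f t := by
  rw [integral_comp_dotProduct_mulVec hC.inv, integral_comp_dotProduct_self, integral_comp_norm_sq,
    finrank_euclideanSpace, smul_smul, det_nonsing_inv, Ring.inverse_eq_inv', sqrt_inv, inv_inv,
    mul_div_assoc]

lemma setIntegral_Ioi_rpow_mul_exp_neg_half_mul_rpow {p a : ℝ} (hp : 0 < p) (ha : 0 < a) :
    ∫ t in Set.Ioi (0 : ℝ), t ^ (p * a - 1) * exp (-(1 / 2) * t ^ p) = 2 ^ a / p * Gamma a := by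
  rw [integral_rpow_mul_exp_neg_mul_rpow hp (by linarith [mul_pos hp ha]) one_half_pos,
    sub_add_cancel, mul_div_cancel_left₀ a hp.ne', neg_div, mul_div_cancel_left₀ a hp.ne',
    one_div, inv_rpow two_pos.le, rpow_neg two_pos.le, inv_inv, mul_one_div]

section QExponential

variable {ι : Type*} [Fintype ι] [DecidableEq ι]

/-- The density generator of `q-ED(0, C)` on `ℝ^ι`: its density as a function of the value
`t = uᵀ C⁻¹ u` of the quadratic form. -/
noncomputable def qEDGenerator (q : ℝ) (C : Matrix ι ι ℝ) (t : ℝ) : ℝ :=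
  q / 2 * (2 * π) ^ (-(Fintype.card ι : ℝ) / 2) * C.det ^ (-(1 : ℝ) / 2) *
    t ^ ((q / 2 - 1) * ((Fintype.card ι : ℝ) / 2)) * exp (-(1 / 2) * t ^ (q / 2))

/-- The density at `u` of the multivariate q-exponential distribution `q-ED(0, C)` on `ℝ^ι`. -/
noncomputable def qEDDensity (q : ℝ) (C : Matrix ι ι ℝ) (u : ι → ℝ) : ℝ :=
  qEDGenerator q C (u ⬝ᵥ (C⁻¹ *ᵥ u))

lemma rpow_mul_qEDGenerator (q : ℝ) {C : Matrix ι ι ℝ} (hC : C.PosDef) {t : ℝ} (ht : 0 < t) :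
    t ^ ((Fintype.card ι : ℝ) / 2 - 1) * qEDGenerator q C t =
      q / 2 / ((2 * π) ^ ((Fintype.card ι : ℝ) / 2) * √C.det) *
        (t ^ (q / 2 * ((Fintype.card ι : ℝ) / 2) - 1) * exp (-(1 / 2) * t ^ (q / 2))) := by
  have exponent (m : ℝ) : q / 2 * m - 1 = (m - 1) + (q / 2 - 1) * m := by ring
  rw [qEDGenerator, neg_div, neg_div, rpow_neg two_pi_pos.le, rpow_neg hC.det_pos.le,
    ← sqrt_eq_rpow, exponent, rpow_add ht]
  ring

variable [Nonempty ι]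

lemma integral_comp_mul_qEDDensity (q : ℝ) {C : Matrix ι ι ℝ} (hC : C.PosDef) (g : ℝ → ℝ) :
    ∫ u, g (u ⬝ᵥ (C⁻¹ *ᵥ u)) * qEDDensity q C u =
      q / 2 / (2 ^ ((Fintype.card ι : ℝ) / 2) * Gamma ((Fintype.card ι : ℝ) / 2)) *
        ∫ t in Set.Ioi (0 : ℝ), g t *
          (t ^ (q / 2 * ((Fintype.card ι : ℝ) / 2) - 1) * exp (-(1 / 2) * t ^ (q / 2))) := by
  have radial_integrand : ∀ t ∈ Set.Ioi (0 : ℝ),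
      t ^ ((Fintype.card ι : ℝ) / 2 - 1) • (g t * qEDGenerator q C t) =
        q / 2 / ((2 * π) ^ ((Fintype.card ι : ℝ) / 2) * √C.det) * (g t *
          (t ^ (q / 2 * ((Fintype.card ι : ℝ) / 2) - 1) * exp (-(1 / 2) * t ^ (q / 2)))) := by
    intro t ht
    rw [smul_eq_mul, mul_left_comm, rpow_mul_qEDGenerator q hC ht, mul_left_comm]
  have sqrt_det_pos : 0 < √C.det := sqrt_pos.mpr hC.det_pos
  unfold qEDDensity
  rw [integral_comp_dotProduct_inv_mulVec hC fun t ↦ g t * qEDGenerator q C t,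
    setIntegral_congr_fun measurableSet_Ioi radial_integrand, integral_const_mul,
    smul_eq_mul, ← mul_assoc, mul_rpow two_pos.le pi_pos.le]
  congr 1
  field_simp

theorem qED_radial_moments_general {q s : ℝ} (hq : 0 < q) {C : Matrix ι ι ℝ} (hC : C.PosDef)
    (hs : 0 < (Fintype.card ι : ℝ) / 2 + s / q) :
    ∫ u, (u ⬝ᵥ (C⁻¹ *ᵥ u)) ^ (s / 2) * qEDDensity q C u =
      2 ^ (s / q) * Gamma ((Fintype.card ι : ℝ) / 2 + s / q) /
        Gamma ((Fintype.card ι : ℝ) / 2) := by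
  have merge_powers : ∀ t ∈ Set.Ioi (0 : ℝ),
      t ^ (s / 2) *
          (t ^ (q / 2 * ((Fintype.card ι : ℝ) / 2) - 1) * exp (-(1 / 2) * t ^ (q / 2))) =
        t ^ (q / 2 * ((Fintype.card ι : ℝ) / 2 + s / q) - 1) * exp (-(1 / 2) * t ^ (q / 2)) := by
    intro t ht
    rw [← mul_assoc, ← rpow_add ht]
    congr 2
    field_simp
    ring
  rw [integral_comp_mul_qEDDensity q hC (· ^ (s / 2)),
    setIntegral_congr_fun measurableSet_Ioi merge_powers,
    setIntegral_Ioi_rpow_mul_exp_neg_half_mul_rpow (half_pos hq) hs, rpow_add two_pos]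
  field_simp

end QExponential

/-- If `u` has the multivariate q-exponential density `q-ED_d(0, C)` and
`R = r(u)^{1/2}`, then `E[R^k] = 2^{k/q} Γ(d/2 + k/q) / Γ(d/2)`. -/
theorem qED_radial_moments
    (d : ℕ) (hd : 1 ≤ d) (q : ℝ) (hq : 0 < q) (k : ℕ)
    (C : Matrix (Fin d) (Fin d) ℝ) (hC : C.PosDef) :
    ∫ u : Fin d → ℝ,
      (u ⬝ᵥ (C⁻¹ *ᵥ u)) ^ ((k : ℝ) / 2) *
        (q / 2 * (2 * Real.pi) ^ (-(d : ℝ) / 2) * C.det ^ (-(1 : ℝ) / 2) *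
          (u ⬝ᵥ (C⁻¹ *ᵥ u)) ^ ((q / 2 - 1) * ((d : ℝ) / 2)) *
          Real.exp (-(1 / 2) * (u ⬝ᵥ (C⁻¹ *ᵥ u)) ^ (q / 2))) =
      2 ^ ((k : ℝ) / q) * Real.Gamma ((d : ℝ) / 2 + (k : ℝ) / q) /
        Real.Gamma ((d : ℝ) / 2) := by
  have : Nonempty (Fin d) := ⟨⟨0, hd⟩⟩
  have hs : 0 < (Fintype.card (Fin d) : ℝ) / 2 + (k : ℝ) / q := by
    rw [Fintype.card_fin]
    positivity
  simpa only [qEDDensity, qEDGenerator, Fintype.card_fin] using qED_radial_moments_general hq hC hs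
end

section
/- Let d ≥ 1, q > 0, μ ∈ ℝ^d, and let C ∈ ℝ^{d×d} be symmetric positive definite. If the random vector u ∈ ℝ^d has the multivariate q-exponential density p(u) = (q/2)(2π)^{−d/2} det(C)^{−1/2} r(u)^{(q/2−1)(d/2)} exp{−(1/2) r(u)^{q/2}} with r(u) = (u−μ)ᵀ C^{−1} (u−μ), then the covariance matrix of u equals (2^{2/q} Γ(d/2 + 2/q) / (d Γ(d/2))) · C; i.e. for all coordinates i, j one has ∫_{ℝ^d} (u_i − μ_i)(u_j − μ_j) p(u) du = (2^{2/q} Γ(d/2 + 2/q) / (d Γ(d/2))) · C_{ij}. -/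
open Real MeasureTheory Matrix

/-! Writing `C = A * Aᵀ` and substituting `u = μ + A *ᵥ z` turns `r(u)` into `‖z‖ ^ 2` and the
coordinates of `u - μ` into inner products of `z` with the rows of `A`, whose Gram matrix is `C`.
A radial weight on a Euclidean space is invariant under reflections, so its second moment in a
direction `v` depends only on `‖v‖`; summing over an orthonormal basis identifies it as `‖v‖ ^ 2`
times a constant, and polarization gives all mixed moments. In polar coordinates, the remaining
radial integral is a Gamma integral. -/

section RadialSecondMoments

open scoped RealInnerProductSpace
open Module

variable {E : Type*} [NormedAddCommGroup E] [InnerProductSpace ℝ E] [FiniteDimensional ℝ E]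
  [MeasurableSpace E] [BorelSpace E] {g : ℝ → ℝ}

lemma integral_inner_sq_mul_comp_norm_congr (g : ℝ → ℝ) {v w : E} (h : ‖v‖ = ‖w‖) :
    ∫ x, ⟪x, v⟫ ^ 2 * g ‖x‖ = ∫ x, ⟪x, w⟫ ^ 2 * g ‖x‖ := by
  let T : E ≃ₗᵢ[ℝ] E := (ℝ ∙ (v - w))ᗮ.reflection
  have hT : T v = w := Submodule.reflection_sub h
  calc ∫ x, ⟪x, v⟫ ^ 2 * g ‖x‖ = ∫ x, ⟪T x, w⟫ ^ 2 * g ‖T x‖ := by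
        simp only [← hT, T.inner_map_map, T.norm_map]
    _ = ∫ x, ⟪x, w⟫ ^ 2 * g ‖x‖ :=
        T.measurePreserving.integral_comp T.toHomeomorph.measurableEmbedding
          fun x => ⟪x, w⟫ ^ 2 * g ‖x‖

lemma integrable_inner_sq_mul_comp_norm (hg : Integrable fun x : E => ‖x‖ ^ 2 * g ‖x‖) (v : E) :
    Integrable fun x : E => ⟪x, v⟫ ^ 2 * g ‖x‖ := by
  have bound (x : E) : ‖⟪x, v⟫ ^ 2 / ‖x‖ ^ 2‖ ≤ ‖v‖ ^ 2 := by
    rw [norm_of_nonneg (by positivity)]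
    refine div_le_of_le_mul₀ (by positivity) (by positivity) ?_
    rw [← mul_pow, mul_comm, ← sq_abs]
    gcongr
    exact abs_real_inner_le_norm x v
  refine (hg.bdd_mul (Measurable.aestronglyMeasurable (by fun_prop)) (.of_forall bound)).congr
    (.of_forall fun x => ?_)
  rcases eq_or_ne x 0 with rfl | hx
  · simp
  · have := norm_ne_zero_iff.mpr hx
    field_simp

lemma finrank_mul_integral_inner_sq_mul_comp_norm
    (hg : Integrable fun x : E => ‖x‖ ^ 2 * g ‖x‖) (v : E) :
    finrank ℝ E * ∫ x, ⟪x, v⟫ ^ 2 * g ‖x‖ = ‖v‖ ^ 2 * ∫ x : E, ‖x‖ ^ 2 * g ‖x‖ := by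
  let b := stdOrthonormalBasis ℝ E
  have direction (i) : ∫ x, ⟪x, v⟫ ^ 2 * g ‖x‖ = ‖v‖ ^ 2 * ∫ x, ⟪x, b i⟫ ^ 2 * g ‖x‖ := by
    rw [integral_inner_sq_mul_comp_norm_congr g (w := ‖v‖ • b i) (by simp [norm_smul]),
      ← integral_const_mul]
    simp only [real_inner_smul_right, mul_pow, mul_assoc]
  calc finrank ℝ E * ∫ x, ⟪x, v⟫ ^ 2 * g ‖x‖
      = ∑ i, ‖v‖ ^ 2 * ∫ x, ⟪x, b i⟫ ^ 2 * g ‖x‖ := by simp [← direction]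
    _ = ‖v‖ ^ 2 * ∫ x, ∑ i, ⟪x, b i⟫ ^ 2 * g ‖x‖ := by
      rw [← Finset.mul_sum,
        integral_finsetSum _ fun i _ => integrable_inner_sq_mul_comp_norm hg (b i)]
    _ = ‖v‖ ^ 2 * ∫ x : E, ‖x‖ ^ 2 * g ‖x‖ := by
      simp only [← Finset.sum_mul, b.sum_sq_inner_left]

lemma finrank_mul_integral_inner_mul_inner_mul_comp_norm
    (hg : Integrable fun x : E => ‖x‖ ^ 2 * g ‖x‖) (v w : E) :
    finrank ℝ E * ∫ x, ⟪x, v⟫ * ⟪x, w⟫ * g ‖x‖ = ⟪v, w⟫ * ∫ x : E, ‖x‖ ^ 2 * g ‖x‖ := by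
  have polarization (x : E) : ⟪x, v⟫ * ⟪x, w⟫ * g ‖x‖ =
      4⁻¹ * (⟪x, v + w⟫ ^ 2 * g ‖x‖ - ⟪x, v - w⟫ ^ 2 * g ‖x‖) := by
    rw [inner_add_right, inner_sub_right]
    ring
  simp only [polarization]
  rw [integral_const_mul, integral_sub (integrable_inner_sq_mul_comp_norm hg _)
    (integrable_inner_sq_mul_comp_norm hg _), mul_left_comm, mul_sub,
    finrank_mul_integral_inner_sq_mul_comp_norm hg, finrank_mul_integral_inner_sq_mul_comp_norm hg,
    norm_add_sq_real, norm_sub_sq_real]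
  ring

end RadialSecondMoments

section NormPowerIntegrals

open Module Metric

lemma pow_sub_one_smul_rpow_mul {n : ℕ} (hn : 0 < n) {y : ℝ} (hy : 0 < y) (p a : ℝ) :
    y ^ (n - 1) • (y ^ p * a) = y ^ (n + p - 1) * a := by
  rw [smul_eq_mul, ← mul_assoc, ← rpow_natCast, ← rpow_add hy, Nat.cast_pred hn]
  ring_nf

variable {E : Type*} [NormedAddCommGroup E] [NormedSpace ℝ E] [FiniteDimensional ℝ E]
  [Nontrivial E] [MeasurableSpace E] [BorelSpace E] (ν : Measure E) [ν.IsAddHaarMeasure]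
  {p q b : ℝ}

lemma integrable_norm_rpow_mul_exp_neg_mul_norm_rpow
    (hp : -(finrank ℝ E : ℝ) < p) (hq : 0 < q) (hb : 0 < b) :
    Integrable (fun x : E => ‖x‖ ^ p * exp (-b * ‖x‖ ^ q)) ν := by
  have radial : IntegrableOn
      (fun y : ℝ => y ^ (finrank ℝ E - 1) • (y ^ p * exp (-b * y ^ q))) (Set.Ioi 0) :=
    (integrableOn_rpow_mul_exp_neg_mul_rpow (by linarith) hq hb).congr_fun
      (fun y hy => (pow_sub_one_smul_rpow_mul finrank_pos hy p _).symm) measurableSet_Ioi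
  exact (integrable_fun_norm_addHaar ν (f := fun y => y ^ p * exp (-b * y ^ q))).mpr radial

lemma integral_norm_rpow_mul_exp_neg_mul_norm_rpow
    (hp : -(finrank ℝ E : ℝ) < p) (hq : 0 < q) (hb : 0 < b) :
    ∫ x, ‖x‖ ^ p * exp (-b * ‖x‖ ^ q) ∂ν =
      finrank ℝ E * ν.real (ball 0 1) *
        (b ^ (-((finrank ℝ E + p) / q)) * (1 / q) * Gamma ((finrank ℝ E + p) / q)) := by
  rw [integral_fun_norm_addHaar ν fun y => y ^ p * exp (-b * y ^ q),
    setIntegral_congr_fun measurableSet_Ioi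
      fun y hy => pow_sub_one_smul_rpow_mul finrank_pos hy p _,
    integral_rpow_mul_exp_neg_mul_rpow hq (by linarith) hb, sub_add_cancel, neg_div,
    nsmul_eq_mul, smul_eq_mul, ← mul_assoc]

end NormPowerIntegrals

section QExponential

open Module Metric

/-- The density generator of the `q`-exponential distribution in dimension `n`: up to
normalization, the density as a function of the squared Mahalanobis distance `r`. The dimension is
a real number so that no casts are needed in the exponents. -/
noncomputable def qExponentialGenerator (n q r : ℝ) : ℝ :=
  r ^ ((q / 2 - 1) * (n / 2)) * exp (-(1 / 2) * r ^ (q / 2))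

lemma sq_mul_qExponentialGenerator_sq {y : ℝ} (hy : 0 < y) (n q : ℝ) :
    y ^ 2 * qExponentialGenerator n q (y ^ 2) =
      y ^ (q * n / 2 - n + 2) * exp (-(1 / 2) * y ^ q) := by
  rw [qExponentialGenerator, ← rpow_natCast_mul hy.le, ← rpow_natCast_mul hy.le, ← mul_assoc,
    ← rpow_natCast, ← rpow_add hy]
  push_cast
  ring_nf

variable {E : Type*} [NormedAddCommGroup E] [InnerProductSpace ℝ E] [FiniteDimensional ℝ E]
  [Nontrivial E] [MeasurableSpace E] [BorelSpace E] {q : ℝ}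

variable (E) in
lemma finrank_mul_volume_real_unit_ball :
    finrank ℝ E * volume.real (ball (0 : E) 1) =
      2 * π ^ (finrank ℝ E / 2 : ℝ) / Gamma (finrank ℝ E / 2) := by
  have hn : (0 : ℝ) < finrank ℝ E := Nat.cast_pos.mpr finrank_pos
  rw [measureReal_def, InnerProductSpace.volume_ball, ENNReal.ofReal_one, one_pow, one_mul,
    Gamma_add_one (half_pos hn).ne', ENNReal.toReal_ofReal (by positivity), sqrt_eq_rpow,
    ← rpow_mul_natCast pi_nonneg, one_div_mul_eq_div]
  field_simp

variable (E q) in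
lemma sq_norm_mul_qExponentialGenerator_ae_eq :
    (fun x : E => ‖x‖ ^ 2 * qExponentialGenerator (finrank ℝ E) q (‖x‖ ^ 2)) =ᵐ[volume]
      fun x => ‖x‖ ^ (q * finrank ℝ E / 2 - finrank ℝ E + 2) * exp (-(1 / 2) * ‖x‖ ^ q) := by
  filter_upwards [Measure.ae_ne volume (0 : E)] with x hx
  exact sq_mul_qExponentialGenerator_sq (norm_pos_iff.mpr hx) _ _

variable (E) in
lemma integrable_sq_norm_mul_qExponentialGenerator (hq : 0 < q) :
    Integrable fun x : E => ‖x‖ ^ 2 * qExponentialGenerator (finrank ℝ E) q (‖x‖ ^ 2) := by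
  have : 0 ≤ q * finrank ℝ E := by positivity
  exact (integrable_norm_rpow_mul_exp_neg_mul_norm_rpow volume (by linarith) hq
    one_half_pos).congr (sq_norm_mul_qExponentialGenerator_ae_eq E q).symm

variable (E) in
lemma integral_sq_norm_mul_qExponentialGenerator (hq : 0 < q) :
    ∫ x : E, ‖x‖ ^ 2 * qExponentialGenerator (finrank ℝ E) q (‖x‖ ^ 2) =
      (2 * π) ^ (finrank ℝ E / 2 : ℝ) * (2 / q) *
        (2 ^ (2 / q) * Gamma (finrank ℝ E / 2 + 2 / q) / Gamma (finrank ℝ E / 2)) := by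
  have hn : 0 ≤ q * finrank ℝ E := by positivity
  have exponent : (finrank ℝ E + (q * finrank ℝ E / 2 - finrank ℝ E + 2)) / q =
      finrank ℝ E / 2 + 2 / q := by
    field_simp
    ring
  rw [integral_congr_ae (sq_norm_mul_qExponentialGenerator_ae_eq E q),
    integral_norm_rpow_mul_exp_neg_mul_norm_rpow volume (by linarith) hq one_half_pos,
    finrank_mul_volume_real_unit_ball, exponent, one_div 2, inv_rpow zero_le_two,
    rpow_neg zero_le_two, inv_inv, rpow_add two_pos, mul_rpow zero_le_two pi_nonneg]
  ring

end QExponential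

section EllipticalSecondMoments

variable {ι : Type*} [Fintype ι] [DecidableEq ι]

lemma integral_comp_mulVec {F : Type*} [NormedAddCommGroup F] [NormedSpace ℝ F]
    {A : Matrix ι ι ℝ} (hA : A.det ≠ 0) (f : (ι → ℝ) → F) :
    ∫ z, f (A *ᵥ z) = |A.det|⁻¹ • ∫ u, f u := by
  have emb : MeasurableEmbedding (toLin' A) :=
    (toLin' A).continuous_of_finiteDimensional.measurableEmbedding
      (mulVec_injective_of_isUnit ((isUnit_iff_isUnit_det A).mpr hA.isUnit))
  have := emb.integral_map (μ := volume) f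
  rw [Real.map_matrix_volume_pi_eq_smul_volume_pi hA, integral_smul_measure, abs_inv,
    ENNReal.toReal_ofReal (by positivity)] at this
  exact this.symm

open scoped MatrixOrder Matrix.Norms.L2Operator in
lemma exists_eq_mul_transpose_of_posDef {C : Matrix ι ι ℝ} (hC : C.PosDef) :
    ∃ A : Matrix ι ι ℝ, A.det ≠ 0 ∧ C = A * Aᵀ := by
  obtain ⟨B, rfl⟩ := CStarAlgebra.nonneg_iff_eq_star_mul_self.mp hC.posSemidef.nonneg
  refine ⟨Bᵀ, fun h => hC.det_pos.ne' ?_, ?_⟩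
  · rw [det_mul, ← det_transpose B, h, mul_zero]
  · rw [transpose_transpose, star_eq_conjTranspose, conjTranspose_eq_transpose_of_trivial]

lemma mulVec_dotProduct_inv_mul_transpose_mulVec {R : Type*} [CommRing R] {A : Matrix ι ι R}
    (hA : IsUnit A.det) (z : ι → R) :
    (A *ᵥ z) ⬝ᵥ ((A * Aᵀ)⁻¹ *ᵥ (A *ᵥ z)) = z ⬝ᵥ z := by
  have hAt : IsUnit Aᵀ.det := by rwa [det_transpose]
  rw [Matrix.mul_inv_rev, mulVec_mulVec, Matrix.mul_assoc, nonsing_inv_mul _ hA, Matrix.mul_one,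
    dotProduct_mulVec, ← vecMul_transpose, vecMul_vecMul, mul_nonsing_inv _ hAt, vecMul_one]

lemma card_mul_integral_sub_mul_sub_mul_comp_mahalanobis {g : ℝ → ℝ}
    (hg : Integrable fun x : EuclideanSpace ℝ ι => ‖x‖ ^ 2 * g (‖x‖ ^ 2))
    (μ : ι → ℝ) {C : Matrix ι ι ℝ} (hC : C.PosDef) (i j : ι) :
    Fintype.card ι *
        ∫ u : ι → ℝ, (u i - μ i) * (u j - μ j) * g ((u - μ) ⬝ᵥ (C⁻¹ *ᵥ (u - μ))) =
      √C.det * C i j * ∫ x : EuclideanSpace ℝ ι, ‖x‖ ^ 2 * g (‖x‖ ^ 2) := by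
  obtain ⟨A, hA, rfl⟩ := exists_eq_mul_transpose_of_posDef hC
  let row (k : ι) : EuclideanSpace ℝ ι := WithLp.toLp 2 (A k)
  let f (v : ι → ℝ) : ℝ := v i * v j * g (v ⬝ᵥ ((A * Aᵀ)⁻¹ *ᵥ v))
  have gram : inner ℝ (row i) (row j) = (A * Aᵀ) i j := by
    simp [row, PiLp.inner_apply, Matrix.mul_apply, mul_comm]
  have det_factor : √(A * Aᵀ).det = |A.det| := by
    rw [det_mul, det_transpose, sqrt_mul_self_eq_abs]
  have pullback (x : EuclideanSpace ℝ ι) :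
      f (A *ᵥ x.ofLp) = inner ℝ x (row i) * inner ℝ x (row j) * g (‖x‖ ^ 2) := by
    simp only [f, mulVec_dotProduct_inv_mul_transpose_mulVec hA.isUnit]
    congr 2
    rw [EuclideanSpace.real_norm_sq_eq]
    simp only [dotProduct, sq]
  have translated : ∫ u : ι → ℝ, (u i - μ i) * (u j - μ j) *
      g ((u - μ) ⬝ᵥ ((A * Aᵀ)⁻¹ *ᵥ (u - μ))) = ∫ v, f v :=
    integral_sub_right_eq_self f μ
  have substituted : ∫ v, f v = |A.det| *
      ∫ x : EuclideanSpace ℝ ι, inner ℝ x (row i) * inner ℝ x (row j) * g (‖x‖ ^ 2) := by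
    simp only [← pullback]
    rw [(PiLp.volume_preserving_ofLp ι).integral_comp
      (MeasurableEquiv.toLp 2 _).symm.measurableEmbedding fun z => f (A *ᵥ z),
      integral_comp_mulVec hA, smul_eq_mul, mul_inv_cancel_left₀ (abs_ne_zero.mpr hA)]
  have moments := finrank_mul_integral_inner_mul_inner_mul_comp_norm
    (g := fun y => g (y ^ 2)) hg (row i) (row j)
  rw [finrank_euclideanSpace, gram] at moments
  rw [translated, substituted, det_factor, mul_left_comm, moments, mul_assoc]

end EllipticalSecondMoments

section Covariance

variable {ι : Type*} [Fintype ι] [DecidableEq ι]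

/-- The real-valued density of the multivariate `q`-exponential distribution `q-ED(μ, C)` with
respect to Lebesgue measure on `ι → ℝ`. The scale matrix `C` is proportional, but in general not
equal, to the covariance matrix. -/
noncomputable def qExponentialPDF (q : ℝ) (μ : ι → ℝ) (C : Matrix ι ι ℝ) (u : ι → ℝ) : ℝ :=
  q / 2 * (2 * π) ^ (-(Fintype.card ι : ℝ) / 2) * C.det ^ (-(1 : ℝ) / 2) *
    qExponentialGenerator (Fintype.card ι) q ((u - μ) ⬝ᵥ (C⁻¹ *ᵥ (u - μ)))

theorem qED_covariance_general {q : ℝ} (hq : 0 < q) (μ : ι → ℝ) {C : Matrix ι ι ℝ}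
    (hC : C.PosDef) (i j : ι) :
    ∫ u, (u i - μ i) * (u j - μ j) * qExponentialPDF q μ C u =
      2 ^ (2 / q) * Gamma (Fintype.card ι / 2 + 2 / q) /
        (Fintype.card ι * Gamma (Fintype.card ι / 2)) * C i j := by
  have : Nonempty ι := ⟨i⟩
  have hn : (0 : ℝ) < Fintype.card ι := Nat.cast_pos.mpr Fintype.card_pos
  have hdet := sqrt_pos.mpr hC.det_pos
  have hint := integrable_sq_norm_mul_qExponentialGenerator (EuclideanSpace ℝ ι) hq
  have moment := card_mul_integral_sub_mul_sub_mul_comp_mahalanobis hint μ hC i j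
  rw [integral_sq_norm_mul_qExponentialGenerator (EuclideanSpace ℝ ι) hq,
    finrank_euclideanSpace, mul_comm, ← eq_div_iff hn.ne'] at moment
  simp only [qExponentialPDF, mul_left_comm _ (_ * _ * _) (qExponentialGenerator _ _ _)]
  rw [integral_const_mul, moment, neg_div, rpow_neg (by positivity), neg_div,
    rpow_neg hC.det_pos.le, ← sqrt_eq_rpow]
  field_simp

end Covariance

/-- If `u` has the multivariate q-exponential density `q-ED_d(μ, C)`, then the
covariance matrix of `u` equals `(2^{2/q} Γ(d/2 + 2/q) / (d Γ(d/2))) · C`. -/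
theorem qED_covariance
    (d : ℕ) (hd : 1 ≤ d) (q : ℝ) (hq : 0 < q)
    (μ : Fin d → ℝ) (C : Matrix (Fin d) (Fin d) ℝ) (hC : C.PosDef) :
    ∀ i j : Fin d,
      ∫ u : Fin d → ℝ,
        (u i - μ i) * (u j - μ j) *
          (q / 2 * (2 * Real.pi) ^ (-(d : ℝ) / 2) * C.det ^ (-(1 : ℝ) / 2) *
            ((u - μ) ⬝ᵥ (C⁻¹ *ᵥ (u - μ))) ^ ((q / 2 - 1) * ((d : ℝ) / 2)) *
            Real.exp (-(1 / 2) * ((u - μ) ⬝ᵥ (C⁻¹ *ᵥ (u - μ))) ^ (q / 2))) =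
        2 ^ ((2 : ℝ) / q) * Real.Gamma ((d : ℝ) / 2 + 2 / q) /
          ((d : ℝ) * Real.Gamma ((d : ℝ) / 2)) * C i j := by
  intro i j
  simpa only [qExponentialPDF, qExponentialGenerator, Fintype.card_fin, mul_assoc] using
    qED_covariance_general hq μ hC i j
end
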